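/- Let a ≥ 2 and n be integers with 2a − 2 < n, and let σ be a uniformly random permutation of {1,…,n}. Then the probability that D_{a,a−2}(σ) = 0 is at most 1/(2(n−1)); equivalently, the number of permutations σ of {1,…,n} with D_{a,a−2}(σ) = 0 is at most n!/(2(n−1)). -/

import Mathlib

/-!
Write `D` for `D_{a,a-2}`. Two symmetries of the set of permutations drive the proof: reversing
the values (`v ↦ n + 1 - v`) turns `D` into `2(n+1) - D`, and adding `1` cyclically to all values
turns `D` into `D + 2 - n e` with `e ∈ {-1, 0, 1}` (`D_rev`, `D_shift`).

By reversal, `D = 0` and `D = 2(n+1)` are equally likely. If `D(σ) = 0`, then the shift of `σ` has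
`D ≤ n + 2 < 2(n+1)`; so the zeros of `D` and the permutations whose shift has `D = 2(n+1)` are
disjoint, and both consist of permutations with `n ∣ D`. Hence `2 P(D = 0) ≤ P(n ∣ D)`
(`two_mul_card_zero_le`). Shifting also shows that all residue classes `2k` modulo `n` are equally
likely values of `D` (`card_residue`).

For odd `n` these are all the classes, so `P(n ∣ D) = 1/n`. For even `n` they are the `n/2` even
classes, so `P(n ∣ D) = (2/n) P(D even)`, and `P(D even) ≤ n / (2(n-1))` is needed. This says that
the expected product `t_m` of the signs `(-1)^{σ(i)}` over `m = 2a - 2` positions is at most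
`1/(n-1)`. As the `n` signs sum to zero, `(n-m-1) t_{m+2} = -(m+1) t_m` (`signSum_rec`), so `|t_m|`
over even `m` decreases up to the middle and increases afterwards; since `t_0 = 1` and
`|t_n| ≤ 1`, the recursion gives `|t_2|, |t_{n-2}| ≤ 1/(n-1)`, which bounds everything between
(`signSum_bound`).
-/

/-- `D n a b σ = (σ(1)+⋯+σ(a)) − (σ(a+1)+⋯+σ(a+b))` for a permutation `σ` of `{1,…,n}`,
modelled as a permutation of `Fin n` with values `σ i + 1 ∈ {1,…,n}`. -/
def D (n a b : ℕ) (σ : Equiv.Perm (Fin n)) : ℤ :=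
  (∑ i ∈ Finset.univ.filter (fun i : Fin n => (i : ℕ) < a), ((σ i : ℕ) + 1 : ℤ))
    - ∑ i ∈ Finset.univ.filter (fun i : Fin n => a ≤ (i : ℕ) ∧ (i : ℕ) < a + b),
        ((σ i : ℕ) + 1 : ℤ)

open Finset

/-! ### `D` as a weighted sum -/

/-- The coefficient of `σ(i+1)` in `D_{a,a-2}(σ)`. -/
def weight (a n : ℕ) (i : Fin n) : ℤ :=
  if (i : ℕ) < a then 1 else if (i : ℕ) < a + (a - 2) then -1 else 0

lemma D_eq_sum_weight (a n : ℕ) (σ : Equiv.Perm (Fin n)) :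
    D n a (a - 2) σ = ∑ i, weight a n i * ((σ i : ℕ) + 1 : ℤ) := by
  unfold D weight
  rw [sum_filter, sum_filter, ← sum_sub_distrib]
  refine sum_congr rfl fun i _ => ?_
  by_cases h1 : (i : ℕ) < a
  · have : ¬ a ≤ (i : ℕ) := by omega
    simp [h1, this]
  · by_cases h2 : (i : ℕ) < a + (a - 2)
    · have : a ≤ (i : ℕ) := by omega
      simp [h1, h2, this]
    · simp [h1, h2]

lemma sum_weight (a n : ℕ) (ha : 2 ≤ a) (hn : 2 * a - 2 < n) :
    ∑ i, weight a n i = 2 := by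
  have h : ∀ i : Fin n, weight a n i
      = 2 * (if (i : ℕ) < a then 1 else 0) - (if (i : ℕ) < a + (a - 2) then 1 else 0) := by
    intro i
    unfold weight
    split_ifs <;> first | rfl | omega
  simp only [h, sum_sub_distrib, ← mul_sum, sum_boole, Fin.card_filter_val_lt]
  have h1 : min n a = a := by omega
  have h2 : min n (a + (a - 2)) = a + (a - 2) := by omega
  rw [h1, h2]
  push_cast [Nat.cast_sub ha]
  ring

lemma weight_bounds (a n : ℕ) (i : Fin n) : -1 ≤ weight a n i ∧ weight a n i ≤ 1 := by
  unfold weight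
  split_ifs <;> simp

/-! ### Shift and reversal -/

/-- Adding `1` to every value of a permutation, cyclically modulo `n`. -/
def shift (n : ℕ) [NeZero n] : Equiv.Perm (Fin n) ≃ Equiv.Perm (Fin n) :=
  Equiv.mulLeft (Equiv.addRight (1 : Fin n))

lemma shift_apply (n : ℕ) [NeZero n] (σ : Equiv.Perm (Fin n)) (i : Fin n) :
    shift n σ i = σ i + 1 := rfl

lemma val_add_one_int (n : ℕ) [NeZero n] (hn : 2 ≤ n) (x : Fin n) :
    ((x + 1 : Fin n) : ℕ) = ((x : ℕ) + 1 : ℤ) - n * (if (x : ℕ) = n - 1 then 1 else 0) := by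
  have h1 : ((1 : Fin n) : ℕ) = 1 := by
    rw [Fin.val_one', Nat.mod_eq_of_lt (by omega)]
  have hx := x.2
  rw [Fin.val_add_eq_ite, h1]
  split_ifs <;> push_cast <;> omega

/-- A cyclic shift adds `2` to `D_{a,a-2}`, up to the contribution of the one value that wraps
around. -/
lemma D_shift (a n : ℕ) [NeZero n] (ha : 2 ≤ a) (hn : 2 * a - 2 < n) (σ : Equiv.Perm (Fin n)) :
    ∃ e : ℤ, -1 ≤ e ∧ e ≤ 1 ∧
      D n a (a - 2) (shift n σ) = D n a (a - 2) σ + 2 - n * e := by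
  have hlast : n - 1 < n := by omega
  refine ⟨weight a n (σ.symm ⟨n - 1, hlast⟩), (weight_bounds _ _ _).1, (weight_bounds _ _ _).2, ?_⟩
  have key : ∀ i : Fin n, weight a n i * (((shift n σ i : Fin n) : ℕ) + 1 : ℤ)
      = weight a n i * ((σ i : ℕ) + 1 : ℤ) + weight a n i
        - n * (if i = σ.symm ⟨n - 1, hlast⟩ then weight a n i else 0) := by
    intro i
    have hi : ((σ i : ℕ) = n - 1) ↔ i = σ.symm ⟨n - 1, hlast⟩ := by
      rw [Equiv.eq_symm_apply, Fin.ext_iff]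
    rw [shift_apply, val_add_one_int n (by omega)]
    simp only [hi]
    split_ifs <;> ring
  rw [D_eq_sum_weight, D_eq_sum_weight, sum_congr rfl fun i _ => key i, sum_sub_distrib,
    sum_add_distrib, sum_weight a n ha hn, ← mul_sum]
  simp

/-- Replacing every value `v` by `n + 1 - v` reflects `D_{a,a-2}` about `n + 1`. -/
lemma D_rev (a n : ℕ) (ha : 2 ≤ a) (hn : 2 * a - 2 < n) (σ : Equiv.Perm (Fin n)) :
    D n a (a - 2) (Fin.revPerm * σ) = 2 * (n + 1) - D n a (a - 2) σ := by
  have key : ∀ i : Fin n, weight a n i * ((((Fin.revPerm * σ : Equiv.Perm (Fin n)) i : Fin n) : ℕ) + 1 : ℤ)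
      = weight a n i * (n + 1) - weight a n i * ((σ i : ℕ) + 1 : ℤ) := by
    intro i
    have h := (σ i).2
    rw [Equiv.Perm.mul_apply, Fin.revPerm_apply, Fin.val_rev]
    push_cast [Nat.cast_sub (show (σ i : ℕ) + 1 ≤ n by omega)]
    ring
  rw [D_eq_sum_weight, D_eq_sum_weight, sum_congr rfl fun i _ => key i, sum_sub_distrib,
    ← sum_mul, sum_weight a n ha hn]

/-- The zeros of `D`, together with the inverse shifts of the permutations with `D = 2(n+1)`,
form two disjoint sets of equal size on which `D` is a multiple of `n`. -/
lemma two_mul_card_zero_le (a n : ℕ) [NeZero n] (ha : 2 ≤ a) (hn : 2 * a - 2 < n) :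
    2 * #{σ : Equiv.Perm (Fin n) | D n a (a - 2) σ = 0}
      ≤ #{σ : Equiv.Perm (Fin n) | (n : ℤ) ∣ D n a (a - 2) σ} := by
  have hW : #{σ : Equiv.Perm (Fin n) | D n a (a - 2) σ = 0}
      = #{σ : Equiv.Perm (Fin n) | D n a (a - 2) (shift n σ) = 2 * (n + 1)} := by
    refine card_equiv ((Equiv.mulLeft Fin.revPerm).trans (shift n).symm) fun σ => ?_
    have := D_rev a n ha hn σ
    simp only [mem_filter, mem_univ, true_and, Equiv.trans_apply, Equiv.apply_symm_apply,
      Equiv.coe_mulLeft]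
    rw [this]
    constructor <;> intro h <;> linarith
  have hdisj : Disjoint ({σ : Equiv.Perm (Fin n) | D n a (a - 2) σ = 0} : Finset _)
      ({σ : Equiv.Perm (Fin n) | D n a (a - 2) (shift n σ) = 2 * (n + 1)} : Finset _) := by
    rw [disjoint_filter]
    intro σ _ h0 h1
    obtain ⟨e, he, -, hs⟩ := D_shift a n ha hn σ
    rw [h0, h1] at hs
    have : (0 : ℤ) < n := by omega
    nlinarith
  rw [two_mul]
  nth_rewrite 2 [hW]
  rw [← card_union_of_disjoint hdisj]
  refine card_le_card fun σ hσ => ?_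
  simp only [mem_union, mem_filter, mem_univ, true_and] at hσ ⊢
  rcases hσ with h | h
  · simp [h]
  · obtain ⟨e, -, -, hs⟩ := D_shift a n ha hn σ
    exact ⟨2 + e, by linarith⟩

/-- Shifting `k` times identifies the residue classes `0` and `2k` of `D` modulo `n`. -/
lemma card_residue (a n : ℕ) [NeZero n] (ha : 2 ≤ a) (hn : 2 * a - 2 < n) (k : ℕ) :
    #{σ : Equiv.Perm (Fin n) | (n : ℤ) ∣ D n a (a - 2) σ - 2 * k}
      = #{σ : Equiv.Perm (Fin n) | (n : ℤ) ∣ D n a (a - 2) σ} := by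
  induction k with
  | zero => simp
  | succ k ih =>
    rw [← ih]
    refine (card_equiv (shift n) fun σ => ?_).symm
    simp only [mem_filter, mem_univ, true_and]
    obtain ⟨e, -, -, hs⟩ := D_shift a n ha hn σ
    have : D n a (a - 2) (shift n σ) - 2 * ((k + 1 : ℕ) : ℤ)
        = (D n a (a - 2) σ - 2 * k) - n * e := by
      rw [hs]; push_cast; ring
    rw [this, dvd_sub_left (dvd_mul_right _ _)]

/-- If `0, 2, …, 2(K-1)` are distinct modulo `n`, the corresponding `K` residue classes of `D`
are disjoint and of equal size, so together they fill `K` times that size of any `U` containing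
them. -/
lemma mul_card_residue_le (a n K : ℕ) [NeZero n] (ha : 2 ≤ a) (hn : 2 * a - 2 < n)
    (hK : ∀ d : ℕ, 0 < d → d < K → ¬ (n : ℤ) ∣ 2 * d) (U : Finset (Equiv.Perm (Fin n)))
    (hU : ∀ σ, ∀ k : ℕ, (n : ℤ) ∣ D n a (a - 2) σ - 2 * k → σ ∈ U) :
    K * #{σ : Equiv.Perm (Fin n) | (n : ℤ) ∣ D n a (a - 2) σ} ≤ #U := by
  have hne : ∀ i j : ℕ, i < j → j < K → ∀ σ, (n : ℤ) ∣ D n a (a - 2) σ - 2 * i →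
      ¬ (n : ℤ) ∣ D n a (a - 2) σ - 2 * j := by
    intro i j hij hj σ hi hj'
    refine hK (j - i) (by omega) (by omega) ?_
    have h : (2 : ℤ) * ((j - i : ℕ) : ℤ)
        = (D n a (a - 2) σ - 2 * i) - (D n a (a - 2) σ - 2 * j) := by
      push_cast [Nat.cast_sub hij.le]
      ring
    rw [h]
    exact dvd_sub hi hj'
  have hcard := card_biUnion (s := range K)
    (t := fun k => ({σ : Equiv.Perm (Fin n) | (n : ℤ) ∣ D n a (a - 2) σ - 2 * k} : Finset _)) (by
      intro i hi j hj hij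
      simp only [coe_range, Set.mem_Iio] at hi hj
      rw [Function.onFun, disjoint_filter]
      intro σ _ h1 h2
      rcases lt_or_gt_of_ne hij with h | h
      · exact hne i j h hj σ h1 h2
      · exact hne j i h hi σ h2 h1)
  simp only [card_residue a n ha hn, sum_const, card_range, smul_eq_mul] at hcard
  rw [← hcard]
  refine card_le_card fun σ hσ => ?_
  simp only [mem_biUnion, mem_filter, mem_univ, true_and] at hσ
  obtain ⟨k, -, hk⟩ := hσ
  exact hU σ k hk

/-! ### The parity of `D` -/

/-- The sum over all permutations `σ` of the product of the signs `(-1)^{σ(i)}`, `i ∈ S`. -/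
def signSum (n : ℕ) (S : Finset (Fin n)) : ℚ :=
  ∑ σ : Equiv.Perm (Fin n), ∏ i ∈ S, (-1 : ℚ) ^ ((σ i : ℕ) + 1)

/-- By symmetry among the positions, the sum depends only on the number of positions. -/
lemma signSum_congr (n : ℕ) (S S' : Finset (Fin n)) (h : #S = #S') :
    signSum n S = signSum n S' := by
  classical
  let e : {x // x ∈ S} ≃ {x // x ∈ S'} := Fintype.equivOfCardEq (by simpa using h)
  let π : Equiv.Perm (Fin n) := e.extendSubtype
  have hπ : S.map π.toEmbedding = S' := by
    refine eq_of_subset_of_card_le (fun x hx => ?_) (by simp [h])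
    obtain ⟨y, hy, rfl⟩ := mem_map.1 hx
    exact e.extendSubtype_mem y hy
  unfold signSum
  refine (Fintype.sum_equiv (Equiv.mulRight π) _ _ fun σ => ?_).symm
  rw [← hπ, prod_map]
  rfl

/-- For even `n` there are as many odd as even values. -/
lemma sum_sign (n : ℕ) (hn : Even n) : ∑ x : Fin n, (-1 : ℚ) ^ ((x : ℕ) + 1) = 0 := by
  rw [Fin.sum_univ_eq_sum_range (fun x => (-1 : ℚ) ^ (x + 1)) n]
  simp only [pow_succ, mul_neg, mul_one, sum_neg_distrib]
  rw [neg_one_geom_sum]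
  simp [hn]

/-- Multiplying the product over `m + 1` positions by the vanishing sum of all signs and expanding
relates the sums over `m` and `m + 2` positions. -/
lemma signSum_rec (n m : ℕ) (hn : Even n) (S S' : Finset (Fin n)) (hS : #S = m)
    (hS' : #S' = m + 2) :
    ((n : ℚ) - m - 1) * signSum n S' = -((m : ℚ) + 1) * signSum n S := by
  classical
  obtain ⟨R, hRS, hR⟩ := exists_subset_card_eq (show m + 1 ≤ #S' by omega)
  have hRn : m + 1 ≤ n := by
    have := card_le_univ R
    simpa [hR] using this
  have h0 : ∑ j : Fin n, ∑ σ : Equiv.Perm (Fin n),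
      (∏ i ∈ R, (-1 : ℚ) ^ ((σ i : ℕ) + 1)) * (-1 : ℚ) ^ ((σ j : ℕ) + 1) = 0 := by
    rw [sum_comm]
    refine sum_eq_zero fun σ _ => ?_
    rw [← mul_sum, Equiv.sum_comp σ (fun x : Fin n => (-1 : ℚ) ^ ((x : ℕ) + 1)), sum_sign n hn,
      mul_zero]
  have hin : ∀ j ∈ R, ∑ σ : Equiv.Perm (Fin n),
      (∏ i ∈ R, (-1 : ℚ) ^ ((σ i : ℕ) + 1)) * (-1 : ℚ) ^ ((σ j : ℕ) + 1) = signSum n S := by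
    intro j hj
    rw [signSum_congr n S (R.erase j) (by rw [card_erase_of_mem hj]; omega)]
    refine sum_congr rfl fun σ _ => ?_
    rw [← prod_erase_mul _ _ hj, mul_assoc, ← mul_pow]
    simp
  have hout : ∀ j ∈ Rᶜ, ∑ σ : Equiv.Perm (Fin n),
      (∏ i ∈ R, (-1 : ℚ) ^ ((σ i : ℕ) + 1)) * (-1 : ℚ) ^ ((σ j : ℕ) + 1) = signSum n S' := by
    intro j hj
    rw [mem_compl] at hj
    rw [signSum_congr n S' (insert j R) (by rw [card_insert_of_notMem hj]; omega)]
    refine sum_congr rfl fun σ _ => ?_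
    rw [prod_insert hj, mul_comm]
  rw [← sum_add_sum_compl R, sum_congr rfl hin, sum_congr rfl hout, sum_const, sum_const,
    card_compl, hR, Fintype.card_fin, nsmul_eq_mul, nsmul_eq_mul, Nat.cast_sub hRn] at h0
  push_cast at h0
  linarith

/-- The first `m` positions. -/
def initial (n m : ℕ) : Finset (Fin n) := {i | (i : ℕ) < m}

lemma card_initial (n m : ℕ) (h : m ≤ n) : #(initial n m) = m := by
  unfold initial
  rw [Fin.card_filter_val_lt]
  omega

lemma abs_signSum_le (n : ℕ) (S : Finset (Fin n)) : |signSum n S| ≤ (n.factorial : ℚ) := by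
  refine (abs_sum_le_sum_abs _ _).trans ?_
  simp [abs_prod, Fintype.card_perm]

lemma abs_signSum_rec (n m : ℕ) (hn : Even n) (h : m + 2 ≤ n) :
    ((n : ℚ) - m - 1) * |signSum n (initial n (m + 2))|
      = ((m : ℚ) + 1) * |signSum n (initial n m)| := by
  have := congrArg abs (signSum_rec n m hn _ _ (card_initial n m (by omega))
    (card_initial n (m + 2) h))
  have h' : (m : ℚ) + 2 ≤ n := by exact_mod_cast h
  rwa [abs_mul, abs_mul, abs_neg, abs_of_nonneg (show (0 : ℚ) ≤ n - m - 1 by linarith),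
    abs_of_nonneg (show (0 : ℚ) ≤ m + 1 by positivity)] at this

/-- The bound for `m = 2k + 2` positions with `2m ≤ n + 2`, where the recursion is contracting. -/
lemma signSum_bound_low (n k : ℕ) (hn : Even n) (h2 : 2 ≤ n) (hk : 4 * k + 2 ≤ n) :
    ((n : ℚ) - 1) * |signSum n (initial n (2 * k + 2))| ≤ n.factorial := by
  have h2' : (2 : ℚ) ≤ n := by exact_mod_cast h2
  induction k with
  | zero =>
    have := abs_signSum_rec n 0 hn (by omega)
    have h1 := abs_signSum_le n (initial n 0)
    push_cast at this
    simp only [mul_zero, zero_add] at this ⊢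
    linarith
  | succ k ih =>
    refine le_trans (mul_le_mul_of_nonneg_left ?_ (by linarith)) (ih (by omega))
    have := abs_signSum_rec n (2 * k + 2) hn (by omega)
    have hk' : 4 * ((k : ℚ) + 1) + 2 ≤ n := by exact_mod_cast hk
    rw [show 2 * (k + 1) + 2 = 2 * k + 2 + 2 by ring]
    push_cast at this
    have h3 := abs_nonneg (signSum n (initial n (2 * k + 2 + 2)))
    have h4 := abs_nonneg (signSum n (initial n (2 * k + 2)))
    refine le_of_mul_le_mul_left ?_ (show (0 : ℚ) < 2 * k + 2 + 1 by positivity)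
    rw [← this]
    exact mul_le_mul_of_nonneg_right (by linarith) h3

/-- The bound for `m = n - 2k - 2` positions with `2m ≥ n - 2`, where the recursion read from the
full set downwards is contracting. -/
lemma signSum_bound_high (n m k : ℕ) (hn : Even n) (h2 : 2 ≤ n) (hm : m + 2 * k + 2 = n)
    (hk : 4 * k + 2 ≤ n) :
    ((n : ℚ) - 1) * |signSum n (initial n m)| ≤ n.factorial := by
  have h2' : (2 : ℚ) ≤ n := by exact_mod_cast h2
  induction k generalizing m with
  | zero =>
    have := abs_signSum_rec n m hn (by omega)
    have h1 := abs_signSum_le n (initial n (m + 2))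
    have hm' : (n : ℚ) = m + 2 := by rw [← hm]; push_cast; ring
    rw [hm'] at this ⊢
    linarith
  | succ k ih =>
    refine le_trans (mul_le_mul_of_nonneg_left ?_ (by linarith))
      (ih (m + 2) (by omega) (by omega))
    have := abs_signSum_rec n m hn (by omega)
    have hk' : 4 * ((k : ℚ) + 1) + 2 ≤ n := by exact_mod_cast hk
    have hm' : (m : ℚ) + 2 * (k + 1) + 2 = n := by exact_mod_cast hm
    have h3 := abs_nonneg (signSum n (initial n m))
    refine le_of_mul_le_mul_left ?_ (show (0 : ℚ) < n - m - 1 by linarith)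
    rw [this]
    exact mul_le_mul_of_nonneg_right (by linarith) h3

lemma signSum_bound (n m : ℕ) (hn : Even n) (hm : Even m) (h2 : 2 ≤ m) (hmn : m < n) :
    ((n : ℚ) - 1) * |signSum n (initial n m)| ≤ n.factorial := by
  obtain ⟨N, rfl⟩ := hn
  obtain ⟨M, rfl⟩ := hm
  by_cases h : 2 * M ≤ N + 1
  · have := signSum_bound_low (N + N) (M - 1) ⟨N, rfl⟩ (by omega) (by omega)
    rwa [show 2 * (M - 1) + 2 = M + M by omega] at this
  · exact signSum_bound_high (N + N) (M + M) (N - M - 1) ⟨N, rfl⟩ (by omega) (by omega) (by omega)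

lemma sign_eq (a n : ℕ) (σ : Equiv.Perm (Fin n)) :
    ∏ i ∈ initial n (a + (a - 2)), (-1 : ℚ) ^ ((σ i : ℕ) + 1)
      = if Even (D n a (a - 2) σ) then 1 else -1 := by
  rw [prod_pow_eq_pow_sum, neg_one_pow_eq_ite]
  refine if_congr ?_ rfl rfl
  have key : (2 : ℤ) ∣ (∑ i ∈ initial n (a + (a - 2)), ((σ i : ℕ) + 1) : ℕ)
      - D n a (a - 2) σ := by
    rw [D_eq_sum_weight, initial, sum_filter]
    push_cast
    rw [← sum_sub_distrib]
    refine dvd_sum fun i _ => ?_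
    unfold weight
    split_ifs with h1 h2 h2
    · simp
    · exact ⟨(σ i : ℕ) + 1, by ring⟩
    · omega
    · simp
  rw [← Int.even_coe_nat, ← sub_add_cancel
    ((∑ i ∈ initial n (a + (a - 2)), ((σ i : ℕ) + 1) : ℕ) : ℤ) (D n a (a - 2) σ), Int.even_add,
    iff_true_left (even_iff_two_dvd.2 key)]

/-- For even `n`, the probability that `D` is even is at most `n / (2(n-1))`. -/
lemma card_even_le (a n : ℕ) (ha : 2 ≤ a) (hn : 2 * a - 2 < n) (hn2 : Even n) :
    2 * ((n : ℚ) - 1) * #{σ : Equiv.Perm (Fin n) | Even (D n a (a - 2) σ)}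
      ≤ n * n.factorial := by
  have hs : signSum n (initial n (a + (a - 2)))
      = 2 * #{σ : Equiv.Perm (Fin n) | Even (D n a (a - 2) σ)} - n.factorial := by
    have hc : ((n.factorial : ℕ) : ℚ) = ∑ _σ : Equiv.Perm (Fin n), (1 : ℚ) := by
      simp [Fintype.card_perm]
    rw [signSum, hc, ← sum_boole, mul_sum, ← sum_sub_distrib]
    refine sum_congr rfl fun σ _ => ?_
    rw [sign_eq]
    split_ifs <;> norm_num
  have hb := signSum_bound n (a + (a - 2)) hn2 ⟨a - 1, by omega⟩ (by omega) (by omega)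
  have h2 : (2 : ℚ) ≤ n := by exact_mod_cast (show 2 ≤ n by omega)
  have := mul_le_mul_of_nonneg_left (le_abs_self (signSum n (initial n (a + (a - 2)))))
    (show (0 : ℚ) ≤ n - 1 by linarith)
  rw [hs] at this hb
  linarith

/-- For `a ≥ 2` and `2a − 2 < n`, a uniformly random permutation `σ` of `{1,…,n}`
satisfies `D_{a,a−2}(σ) = 0` with probability at most `1/(2(n−1))`. -/
theorem prob_D_difftwo_zero (a n : ℕ) (ha : 2 ≤ a) (hn : 2 * a - 2 < n) :
    ((Finset.univ.filter
        (fun σ : Equiv.Perm (Fin n) => D n a (a - 2) σ = 0)).card : ℚ)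
      / (Nat.factorial n : ℚ) ≤ 1 / (2 * ((n : ℚ) - 1)) := by
  have : NeZero n := ⟨by omega⟩
  have h2 : (2 : ℚ) ≤ n := by exact_mod_cast (show 2 ≤ n by omega)
  have hf : (0 : ℚ) < n.factorial := by exact_mod_cast n.factorial_pos
  rw [div_le_div_iff₀ hf (by linarith), one_mul]
  have hZ : (2 : ℚ) * #{σ : Equiv.Perm (Fin n) | D n a (a - 2) σ = 0}
      ≤ #{σ : Equiv.Perm (Fin n) | (n : ℤ) ∣ D n a (a - 2) σ} := by
    exact_mod_cast two_mul_card_zero_le a n ha hn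
  rcases Nat.even_or_odd n with he | ho
  · obtain ⟨N, hN⟩ := id he
    have hK := mul_card_residue_le a n N ha hn (fun d h0 hd h => by
        have := Int.le_of_dvd (by omega) h
        omega)
      {σ : Equiv.Perm (Fin n) | Even (D n a (a - 2) σ)} (fun σ k h => by
        simp only [mem_filter, mem_univ, true_and]
        have h' : (2 : ℤ) ∣ D n a (a - 2) σ - 2 * k := dvd_trans ⟨N, by omega⟩ h
        exact even_iff_two_dvd.2 ((dvd_sub_left (dvd_mul_right _ _)).1 h'))
    have hK' : (N : ℚ) * #{σ : Equiv.Perm (Fin n) | (n : ℤ) ∣ D n a (a - 2) σ}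
        ≤ #{σ : Equiv.Perm (Fin n) | Even (D n a (a - 2) σ)} := by exact_mod_cast hK
    have hE := card_even_le a n ha hn he
    have hN' : (n : ℚ) = 2 * N := by rw [hN]; push_cast; ring
    have hNpos : (0 : ℚ) < N := by linarith
    have h1 := mul_le_mul_of_nonneg_left hZ hNpos.le
    have h3 := mul_le_mul_of_nonneg_left (h1.trans hK') (show (0 : ℚ) ≤ 2 * (n - 1) by linarith)
    refine le_of_mul_le_mul_left ?_ (show (0 : ℚ) < n by linarith)
    refine le_trans (le_of_eq ?_) (h3.trans hE)
    rw [hN']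
    ring
  · have hK := mul_card_residue_le a n n ha hn (fun d h0 hd h => by
        have hc : IsCoprime (n : ℤ) 2 := by
          rw [Int.isCoprime_iff_gcd_eq_one]
          exact_mod_cast (Nat.coprime_two_right.2 ho)
        have := Int.le_of_dvd (by omega) (hc.dvd_of_dvd_mul_left h)
        omega) univ (fun σ k _ => mem_univ σ)
    have hK' : (n : ℚ) * #{σ : Equiv.Perm (Fin n) | (n : ℤ) ∣ D n a (a - 2) σ}
        ≤ n.factorial := by
      rw [card_univ, Fintype.card_perm, Fintype.card_fin] at hK
      exact_mod_cast hK
    have h1 := mul_le_mul_of_nonneg_left hZ (show (0 : ℚ) ≤ n by linarith)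
    have h3 : (0 : ℚ) ≤ #{σ : Equiv.Perm (Fin n) | D n a (a - 2) σ = 0} := by positivity
    linarith
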